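/- Let (Ω, 𝔉, μ) be a measure space and let p : Ω → ℝ be measurable with 1 < p⁻ ≤ p(x) ≤ p⁺ < ∞ for all x ∈ Ω, where p⁻, p⁺ are constants, and let p'(x) := p(x)/(p(x) − 1) be the pointwise conjugate exponent. If u, v : Ω → ℝ are measurable with ∫_Ω |u(x)|^{p(x)} dμ(x) < ∞ and ∫_Ω |v(x)|^{p'(x)} dμ(x) < ∞, then the product u·v is μ-integrable and |∫_Ω u(x) v(x) dμ(x)| ≤ 2 ‖u‖_{p(·)} ‖v‖_{p'(·)}. -/

import Mathlib

/-!
For `l`, `m` admissible in the two Luxemburg infima, Young's inequality applied pointwise to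
`|u x| / l` and `|v x| / m` gives `|u x * v x| ≤ l * m * ((|u x| / l) ^ p x + (|v x| / m) ^ p' x)`,
so integration yields `|∫ u v| ≤ 2 * l * m`; Hölder's inequality follows by taking the infimum over
`l` and then over `m`.

Two points depend on the exponents being bounded or at least `1`. The rescaled modular integrand must
be integrable for every `l > 0` (`integrable_rescaled`), so that its Bochner integral is the
true modular. The set of admissible `l` must be nonempty (`luxNorm_set_nonempty`), since
otherwise the real `sInf` would be `0`.
-/

open MeasureTheory Real

/-- The Luxemburg norm for a variable exponent `p`. -/
noncomputable def luxNorm {Ω : Type*} [MeasurableSpace Ω] (μ : Measure Ω)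
    (p u : Ω → ℝ) : ℝ :=
  sInf {l : ℝ | 0 < l ∧ ∫ x, (|u x| / l) ^ (p x) ∂μ ≤ 1}

lemma integrable_rescaled {Ω : Type*} [MeasurableSpace Ω] {μ : Measure Ω}
    {q w : Ω → ℝ} {Q : ℝ} (hq : Measurable q) (hw : Measurable w)
    (hq1 : ∀ x, 1 ≤ q x) (hqQ : ∀ x, q x ≤ Q)
    (hint : Integrable (fun x => |w x| ^ (q x)) μ) {l : ℝ} (hl : 0 < l) :
    Integrable (fun x => (|w x| / l) ^ (q x)) μ := by
  have hmeas : Measurable (fun x => (|w x| / l) ^ (q x)) :=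
    ((hw.abs).div_const l).pow hq
  refine (hint.const_mul ((max 1 l⁻¹) ^ Q)).mono' hmeas.aestronglyMeasurable ?_
  refine Filter.Eventually.of_forall fun x => ?_
  have hl' : 0 ≤ l⁻¹ := (inv_pos.2 hl).le
  have hq0 : 0 ≤ q x := zero_le_one.trans (hq1 x)
  rw [Real.norm_of_nonneg (by positivity), div_eq_inv_mul,
    Real.mul_rpow hl' (abs_nonneg _)]
  gcongr
  calc l⁻¹ ^ q x ≤ (max 1 l⁻¹) ^ q x := Real.rpow_le_rpow hl' (le_max_right _ _) hq0
    _ ≤ (max 1 l⁻¹) ^ Q := Real.rpow_le_rpow_of_exponent_le (le_max_left _ _) (hqQ x)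

lemma luxNorm_set_nonempty {Ω : Type*} [MeasurableSpace Ω] {μ : Measure Ω}
    {q w : Ω → ℝ} {Q : ℝ} (hq : Measurable q) (hw : Measurable w)
    (hq1 : ∀ x, 1 ≤ q x) (hqQ : ∀ x, q x ≤ Q)
    (hint : Integrable (fun x => |w x| ^ (q x)) μ) :
    {l : ℝ | 0 < l ∧ ∫ x, (|w x| / l) ^ (q x) ∂μ ≤ 1}.Nonempty := by
  -- Any `l ≥ 1` that bounds the modular is admissible, as `(|w| / l) ^ q ≤ |w| ^ q / l`.
  set l : ℝ := max 1 (∫ x, |w x| ^ (q x) ∂μ) with hldef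
  have hl1 : 1 ≤ l := le_max_left _ _
  have hl : 0 < l := zero_lt_one.trans_le hl1
  refine ⟨l, hl, ?_⟩
  calc ∫ x, (|w x| / l) ^ (q x) ∂μ ≤ ∫ x, |w x| ^ (q x) / l ∂μ := by
        refine integral_mono (integrable_rescaled hq hw hq1 hqQ hint hl)
          (hint.div_const l) fun x => ?_
        beta_reduce
        rw [Real.div_rpow (abs_nonneg _) hl.le]
        gcongr
        simpa using Real.rpow_le_rpow_of_exponent_le hl1 (hq1 x)
    _ = (∫ x, |w x| ^ (q x) ∂μ) / l := integral_div _ _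
    _ ≤ 1 := (div_le_one hl).2 (le_max_right _ _)

/-- Young's inequality with the factors `1 / p` and `1 / p'` bounded by `1`. -/
lemma mul_le_rpow_add_rpow_conj {a b r : ℝ} (ha : 0 ≤ a) (hb : 0 ≤ b) (hr : 1 < r) :
    a * b ≤ a ^ r + b ^ (r / (r - 1)) := by
  have hc : r.HolderConjugate (r / (r - 1)) := Real.HolderConjugate.conjExponent hr
  refine (Real.young_inequality_of_nonneg ha hb hc).trans ?_
  exact add_le_add (div_le_self (Real.rpow_nonneg ha _) hr.le)
    (div_le_self (Real.rpow_nonneg hb _) hc.symm.lt.le)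

lemma le_two_mul_sInf_mul_sInf {S T : Set ℝ} {A : ℝ} (hS : S.Nonempty) (hT : T.Nonempty)
    (hS0 : ∀ l ∈ S, 0 < l) (hT0 : ∀ m ∈ T, 0 < m)
    (h : ∀ l ∈ S, ∀ m ∈ T, A ≤ 2 * l * m) : A ≤ 2 * sInf S * sInf T := by
  have h1 : ∀ m ∈ T, A ≤ 2 * sInf S * m := by
    intro m hm
    have hm0 := hT0 m hm
    have : A / (2 * m) ≤ sInf S := le_csInf hS fun l hl => by
      rw [div_le_iff₀ (by positivity)]
      linarith [h l hl m hm]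
    rw [div_le_iff₀ (by positivity)] at this
    linarith
  have hs : 0 ≤ sInf S := Real.sInf_nonneg fun l hl => (hS0 l hl).le
  rcases hs.eq_or_lt with hs | hs
  · obtain ⟨m, hm⟩ := hT
    simpa [← hs] using h1 m hm
  · have : A / (2 * sInf S) ≤ sInf T := le_csInf hT fun m hm => by
      rw [div_le_iff₀ (by positivity)]
      linarith [h1 m hm]
    rw [div_le_iff₀ (by positivity)] at this
    linarith

/-- Hölder's inequality in variable exponent Lebesgue spaces: if `1 < p⁻ ≤ p(x) ≤ p⁺ < ∞`,
`p'(x) = p(x)/(p(x)-1)`, `∫ |u|^{p(x)} < ∞` and `∫ |v|^{p'(x)} < ∞`, then `u·v` is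
integrable and `|∫ u v| ≤ 2 ‖u‖_{p(·)} ‖v‖_{p'(·)}`. -/
theorem luxNorm_holder {Ω : Type*} [MeasurableSpace Ω] (μ : Measure Ω)
    (p u v : Ω → ℝ) (pm pp : ℝ)
    (hp : Measurable p) (hu : Measurable u) (hv : Measurable v)
    (hpm : 1 < pm) (hbd : ∀ x, pm ≤ p x ∧ p x ≤ pp)
    (hfinu : Integrable (fun x => |u x| ^ (p x)) μ)
    (hfinv : Integrable (fun x => |v x| ^ (p x / (p x - 1))) μ) :
    Integrable (fun x => u x * v x) μ ∧
    |∫ x, u x * v x ∂μ| ≤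
      2 * luxNorm μ p u * luxNorm μ (fun x => p x / (p x - 1)) v := by
  have hp1 : ∀ x, 1 < p x := fun x => hpm.trans_le (hbd x).1
  have hc : ∀ x, (p x).HolderConjugate (p x / (p x - 1)) := fun x =>
    Real.HolderConjugate.conjExponent (hp1 x)
  have hq : Measurable (fun x => p x / (p x - 1)) := hp.div (hp.sub_const 1)
  have hq1 : ∀ x, 1 ≤ p x / (p x - 1) := fun x => (hc x).symm.lt.le
  -- `r ↦ r / (r - 1)` is decreasing, so the conjugate exponent is at most that of `pm`.
  have hqQ : ∀ x, p x / (p x - 1) ≤ pm / (pm - 1) := by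
    intro x
    rw [div_le_div_iff₀ (by linarith [hp1 x]) (by linarith)]
    nlinarith [(hbd x).1]
  have hI : Integrable (fun x => u x * v x) μ := by
    refine (hfinu.add hfinv).mono' (hu.mul hv).aestronglyMeasurable ?_
    refine Filter.Eventually.of_forall fun x => ?_
    rw [Real.norm_eq_abs, abs_mul]
    exact mul_le_rpow_add_rpow_conj (abs_nonneg _) (abs_nonneg _) (hp1 x)
  refine ⟨hI, ?_⟩
  refine le_two_mul_sInf_mul_sInf
    (luxNorm_set_nonempty hp hu (fun x => (hp1 x).le) (fun x => (hbd x).2) hfinu)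
    (luxNorm_set_nonempty hq hv hq1 hqQ hfinv) (fun l hl => hl.1) (fun m hm => hm.1) ?_
  rintro l ⟨hl, hlu⟩ m ⟨hm, hmv⟩
  have hiu := integrable_rescaled hp hu (fun x => (hp1 x).le) (fun x => (hbd x).2) hfinu hl
  have hiv := integrable_rescaled hq hv hq1 hqQ hfinv hm
  calc |∫ x, u x * v x ∂μ| ≤ ∫ x, |u x * v x| ∂μ := abs_integral_le_integral_abs
    _ ≤ ∫ x, l * m * ((|u x| / l) ^ (p x) + (|v x| / m) ^ (p x / (p x - 1))) ∂μ := by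
        refine integral_mono hI.abs ((hiu.add hiv).const_mul (l * m)) fun x => ?_
        have hy := mul_le_rpow_add_rpow_conj (a := |u x| / l) (b := |v x| / m)
          (by positivity) (by positivity) (hp1 x)
        calc |u x * v x| = l * m * (|u x| / l * (|v x| / m)) := by
              rw [abs_mul]; field_simp
          _ ≤ _ := by gcongr
    _ = l * m * (∫ x, (|u x| / l) ^ (p x) ∂μ +
          ∫ x, (|v x| / m) ^ (p x / (p x - 1)) ∂μ) := by
        rw [integral_const_mul, integral_add hiu hiv]
    _ ≤ l * m * (1 + 1) := by gcongr
    _ = 2 * l * m := by ring
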